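/- Let n ≥ 3 and let T_n be the scale-free random recursive tree on vertex set {1,…,n}. For every vertex v with 1 ≤ v ≤ n−1 and every integer k with 2 ≤ k ≤ n−1, the expected number of paths of length exactly k containing v as an interior vertex strictly exceeds the expected number of paths of length exactly k containing v+1 as an interior vertex: E[p_k(v)] > E[p_k(v+1)]. -/

import Mathlib

open scoped Classical

noncomputable section

/-- A valid parent function for a recursive tree on vertices `1, …, n` (encoded on
`Fin (n+1)`, where the index `0` is unused): `f t < t` and `f t ≥ 1` for `2 ≤ t ≤ n`,
and `f` is fixed to `0` outside its domain. -/
def ValidPF (n : ℕ) (f : Fin (n+1) → Fin (n+1)) : Prop :=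
  (∀ t : Fin (n+1), t.val < 2 → (f t).val = 0) ∧
  (∀ t : Fin (n+1), 2 ≤ t.val → 1 ≤ (f t).val ∧ (f t).val < t.val)

/-- `degPF n f m v` : the degree `d_f(m, v) = 1 + #{s : 2 ≤ s ≤ m, f s = v}` of vertex
`v` in the tree on `{1, …, m}` (including the virtual edge at vertex 1). -/
def degPF (n : ℕ) (f : Fin (n+1) → Fin (n+1)) (m : ℕ) (v : Fin (n+1)) : ℕ :=
  1 + (Finset.univ.filter (fun s : Fin (n+1) => 2 ≤ s.val ∧ s.val ≤ m ∧ f s = v)).card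

/-- The probability `P_n(f) = ∏_{t=2}^{n} d_f(t-1, f t) / (2t - 3)` of the parent
function `f` under the scale-free (preferential attachment) random tree model. -/
def probPF (n : ℕ) (f : Fin (n+1) → Fin (n+1)) : ℚ :=
  ∏ t ∈ Finset.univ.filter (fun t : Fin (n+1) => 2 ≤ t.val),
    (degPF n f (t.val - 1) (f t) : ℚ) / (2 * (t.val : ℚ) - 3)

/-- The recursive tree `T_n^f` with edge set `{{t, f t} : 2 ≤ t ≤ n}` determined by a
parent function `f`. -/
def treeGraphPF (n : ℕ) (f : Fin (n+1) → Fin (n+1)) : SimpleGraph (Fin (n+1)) :=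
  SimpleGraph.fromRel (fun s t => 2 ≤ t.val ∧ f t = s)

/-- `v` is an interior vertex of the `s`–`t` path: `v ≠ s`, `v ≠ t`, and
`dist s v + dist v t = dist s t`. -/
def IsInterior {V : Type*} (G : SimpleGraph V) (v s t : V) : Prop :=
  v ≠ s ∧ v ≠ t ∧ G.dist s v + G.dist v t = G.dist s t

/-- `pexactPF n f k v` : the number of unordered pairs `{s,t}` with `dist s t = k` such
that `v` is an interior vertex of the `s`–`t` path in `T_n^f` (ordered pairs over two). -/
def pexactPF (n : ℕ) (f : Fin (n+1) → Fin (n+1)) (k : ℕ) (v : Fin (n+1)) : ℕ :=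
  (Finset.univ.filter (fun p : Fin (n+1) × Fin (n+1) =>
    (treeGraphPF n f).dist p.1 p.2 = k ∧ IsInterior (treeGraphPF n f) v p.1 p.2)).card / 2


theorem aux_lip {V : Type*} (G : SimpleGraph V) (h : V → ℕ)
    (hl : ∀ x y, G.Adj x y → h x ≤ h y + 1) {s t : V} (p : G.Walk s t) :
    h s ≤ h t + p.length := by
  induction p with
  | nil => simp
  | cons hadj p ih =>
    have := hl _ _ hadj
    simp only [SimpleGraph.Walk.length_cons]
    omega

theorem aux_const {V : Type*} (G : SimpleGraph V) (v : V) (C : V → V)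
    (hC : ∀ x y, G.Adj x y → x ≠ v → y ≠ v → C x = C y) {s t : V} (p : G.Walk s t)
    (hp : v ∉ p.support) : C s = C t := by
  induction p with
  | nil => rfl
  | cons hadj p ih =>
    simp only [SimpleGraph.Walk.support_cons, List.mem_cons, not_or] at hp
    rw [← ih hp.2]
    refine hC _ _ hadj (Ne.symm hp.1) ?_
    rintro rfl
    exact hp.2 p.start_mem_support

theorem aux_walk {V : Type*} (G : SimpleGraph V) (v : V) (h : V → ℕ) (P : V → Prop)
    (hv : h v = 0)
    (hd : ∀ x, P x → x ≠ v → ∃ y, P y ∧ G.Adj x y ∧ h x = h y + 1) :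
    ∀ m x, P x → h x = m → ∃ p : G.Walk x v, p.length = m := by
  intro m
  induction m with
  | zero =>
    intro x hx hm
    by_cases hxv : x = v
    · subst hxv
      exact ⟨SimpleGraph.Walk.nil, rfl⟩
    · obtain ⟨y, hy, ha, hh⟩ := hd x hx hxv
      omega
  | succ m ih =>
    intro x hx hm
    have hxv : x ≠ v := by rintro rfl; omega
    obtain ⟨y, hy, ha, hh⟩ := hd x hx hxv
    obtain ⟨p, hp⟩ := ih y hy (by omega)
    exact ⟨SimpleGraph.Walk.cons ha p, by simp [hp]⟩

theorem aux_dist {V : Type*} (G : SimpleGraph V) (v : V) (h : V → ℕ) (P : V → Prop)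
    (hv : h v = 0) (hl : ∀ x y, G.Adj x y → h x ≤ h y + 1)
    (hd : ∀ x, P x → x ≠ v → ∃ y, P y ∧ G.Adj x y ∧ h x = h y + 1)
    (x : V) (hx : P x) : G.Reachable x v ∧ G.dist x v = h x := by
  obtain ⟨p, hp⟩ := aux_walk G v h P hv hd _ x hx rfl
  refine ⟨p.reachable, le_antisymm (hp ▸ SimpleGraph.dist_le p) ?_⟩
  obtain ⟨q, hq⟩ := p.reachable.exists_walk_length_eq_dist
  have := aux_lip G h hl q
  omega

theorem aux_walkC {V : Type*} (G : SimpleGraph V) (v : V) (h : V → ℕ) (C : V → V) (P : V → Prop)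
    (hv : h v = 0)
    (hd : ∀ x, P x → x ≠ v → ∃ y, P y ∧ G.Adj x y ∧ h x = h y + 1)
    (hC : ∀ x y, G.Adj x y → x ≠ v → y ≠ v → C x = C y)
    (hCn : ∀ x, G.Adj x v → C x = x) :
    ∀ m x, P x → x ≠ v → h x = m + 1 → ∃ p : G.Walk x (C x), p.length = m := by
  intro m
  induction m with
  | zero =>
    intro x hx hxv hm
    obtain ⟨y, hy, ha, hh⟩ := hd x hx hxv
    by_cases hyv : y = v
    · subst hyv
      rw [hCn x ha]
      exact ⟨SimpleGraph.Walk.nil, rfl⟩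
    · obtain ⟨z, hz, hb, hh'⟩ := hd y hy hyv
      omega
  | succ m ih =>
    intro x hx hxv hm
    obtain ⟨y, hy, ha, hh⟩ := hd x hx hxv
    have hyv : y ≠ v := by rintro rfl; omega
    obtain ⟨p, hp⟩ := ih y hy hyv (by omega)
    rw [hC x y ha hxv hyv]
    exact ⟨SimpleGraph.Walk.cons ha p, by simp [hp]⟩

theorem aux_interior {V : Type*} (G : SimpleGraph V) (v : V) (h : V → ℕ) (C : V → V)
    (P : V → Prop)
    (hv : h v = 0) (hP : ∀ x y, G.Adj x y → P x)
    (hl : ∀ x y, G.Adj x y → h x ≤ h y + 1)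
    (hd : ∀ x, P x → x ≠ v → ∃ y, P y ∧ G.Adj x y ∧ h x = h y + 1)
    (hC : ∀ x y, G.Adj x y → x ≠ v → y ≠ v → C x = C y)
    (hCn : ∀ x, G.Adj x v → C x = x)
    (k : ℕ) (hk : 2 ≤ k) (s t : V) :
    (G.dist s t = k ∧ IsInterior G v s t) ↔
      (P s ∧ P t ∧ s ≠ v ∧ t ≠ v ∧ C s ≠ C t ∧ h s + h t = k) := by
  have hD := aux_dist G v h P hv hl hd
  have key : ∀ x, P x → x ≠ v → ∃ m, h x = m + 1 := by
    intro x hx hxv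
    obtain ⟨y, hy, ha, hh⟩ := hd x hx hxv
    exact ⟨_, hh⟩
  constructor
  · rintro ⟨hdk, hvs, hvt, hi⟩
    have h0 : G.dist s t ≠ 0 := by omega
    obtain ⟨hst, hr⟩ := SimpleGraph.dist_ne_zero_iff_ne_and_reachable.1 h0
    have hPs : ∀ a b, G.Reachable a b → a ≠ b → P a := by
      rintro a b ⟨p⟩ hab
      cases p with
      | nil => exact absurd rfl hab
      | cons ha _ => exact hP _ _ ha
    have hs := hPs s t hr hst
    have ht := hPs t s hr.symm hst.symm
    rw [(hD s hs).2, G.dist_comm (u := v), (hD t ht).2] at hi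
    refine ⟨hs, ht, hvs.symm, hvt.symm, ?_, by omega⟩
    intro hcc
    obtain ⟨a, ha⟩ := key s hs hvs.symm
    obtain ⟨b, hb⟩ := key t ht hvt.symm
    obtain ⟨p, hp⟩ := aux_walkC G v h C P hv hd hC hCn a s hs hvs.symm ha
    obtain ⟨q, hq⟩ := aux_walkC G v h C P hv hd hC hCn b t ht hvt.symm hb
    obtain ⟨q, hq⟩ : ∃ q : G.Walk t (C s), q.length = b := by
      rw [hcc]; exact aux_walkC G v h C P hv hd hC hCn b t ht hvt.symm hb
    have := SimpleGraph.dist_le (p.append q.reverse)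
    simp at this
    omega
  · rintro ⟨hs, ht, hsv, htv, hcc, hh⟩
    have hr : G.Reachable s t := (hD s hs).1.trans (hD t ht).1.symm
    obtain ⟨p, hp⟩ := hr.exists_walk_length_eq_dist
    have hmem : v ∈ p.support := by
      by_contra hcon
      exact hcc (aux_const G v C hC p hcon)
    have h1 := SimpleGraph.dist_le (p.takeUntil v hmem)
    have h2 := SimpleGraph.dist_le (p.dropUntil v hmem)
    have h3 : (p.takeUntil v hmem).length + (p.dropUntil v hmem).length = p.length := by
      rw [← SimpleGraph.Walk.length_append, SimpleGraph.Walk.take_spec]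
    have h4 := (hD s hs).1.dist_triangle_left t
    have h5 : G.dist v t = h t := by rw [G.dist_comm, (hD t ht).2]
    rw [(hD s hs).2] at h1 h4
    rw [h5] at h2 h4
    refine ⟨by omega, hsv.symm, htv.symm, ?_⟩
    rw [h5, (hD s hs).2]
    omega


/-- distance from the centre `a` in the star graph -/
def hS {V : Type*} (R : SimpleGraph V) (ρ : V → V) (a b : V) (A : V → Prop) (x : V) : ℕ :=
  if ρ x = a then R.dist (ρ x) x else if ρ x = b then 1 + R.dist (ρ x) x
  else if A (ρ x) then 1 + R.dist (ρ x) x else 2 + R.dist (ρ x) x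

/-- branch at the centre `a` in the star graph -/
def cS {V : Type*} (ρ : V → V) (a b q : V) (A : V → Prop) (x : V) : V :=
  if ρ x = a then q else if ρ x = b then b
  else if A (ρ x) then ρ x else b

theorem dist_nbr {V : Type*} (R : SimpleGraph V) (r x : V) (hr : R.Reachable r x) (hne : x ≠ r) :
    ∃ y, R.Adj x y ∧ R.dist r x = R.dist r y + 1 := by
  obtain ⟨p, hp⟩ := hr.symm.exists_walk_length_eq_dist
  cases p with
  | nil => exact absurd rfl hne
  | @cons _ y _ ha p =>
    refine ⟨y, ha, ?_⟩
    have h1 := SimpleGraph.dist_le p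
    have h2 := ha.reachable.dist_triangle_left r
    have h3 := SimpleGraph.dist_eq_one_iff_adj.2 ha
    simp only [SimpleGraph.Walk.length_cons] at hp
    rw [R.dist_comm (u := r), R.dist_comm (u := r)]
    omega

theorem star_interior {V : Type*} (G R : SimpleGraph V) (ρ : V → V) (a b q : V)
    (P K A : V → Prop)
    (hG : ∀ x y, G.Adj x y ↔ R.Adj x y ∨
      ((x = b ∧ y = a) ∨ (K x ∧ A x ∧ y = a) ∨ (K x ∧ ¬ A x ∧ y = b)) ∨
      ((y = b ∧ x = a) ∨ (K y ∧ A y ∧ x = a) ∨ (K y ∧ ¬ A y ∧ x = b)))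
    (hab : a ≠ b) (hρa : ρ a = a) (hρb : ρ b = b) (hK : ∀ c, K c → ρ c = c ∧ c ≠ a ∧ c ≠ b ∧ P c)
    (hR : ∀ x y, R.Adj x y → ρ x = ρ y ∧ P x)
    (hρ : ∀ x, P x → (ρ x = a ∨ ρ x = b ∨ K (ρ x)) ∧ R.Reachable (ρ x) x)
    (hPa : P a) (hPb : P b) (hq : ∀ x, R.Adj a x → x = q)
    (k : ℕ) (hk : 2 ≤ k) (s t : V) :
    (G.dist s t = k ∧ IsInterior G a s t) ↔
      (P s ∧ P t ∧ s ≠ a ∧ t ≠ a ∧ cS ρ a b q A s ≠ cS ρ a b q A t ∧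
        hS R ρ a b A s + hS R ρ a b A t = k) := by
  have hlip : ∀ x y, R.Adj x y → R.dist (ρ x) x ≤ R.dist (ρ y) y + 1 := by
    intro x y hxy
    rw [← (hR x y hxy).1]
    have h2 := hxy.symm.reachable.dist_triangle_right (ρ x)
    have h3 := SimpleGraph.dist_eq_one_iff_adj.2 hxy.symm
    omega
  have hsa : hS R ρ a b A a = 0 := by simp [hS, hρa]
  have hsb : hS R ρ a b A b = 1 := by simp [hS, hρb, hab.symm]
  have hsA : ∀ c, K c → A c → hS R ρ a b A c = 1 := by
    intro c hc hA
    obtain ⟨h1, h2, h3, h4⟩ := hK c hc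
    simp [hS, h1, h2, h3, hA]
  have hsB : ∀ c, K c → ¬ A c → hS R ρ a b A c = 2 := by
    intro c hc hA
    obtain ⟨h1, h2, h3, h4⟩ := hK c hc
    simp [hS, h1, h2, h3, hA]
  refine aux_interior G a (hS R ρ a b A) (cS ρ a b q A) P hsa ?_ ?_ ?_ ?_ ?_ k hk s t
  · intro x y hxy
    rcases (hG x y).1 hxy with h | (⟨rfl, rfl⟩ | ⟨h, -, rfl⟩ | ⟨h, -, rfl⟩) |
      (⟨rfl, rfl⟩ | ⟨h, -, rfl⟩ | ⟨h, -, rfl⟩)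
    · exact (hR _ _ h).2
    · exact hPb
    · exact (hK _ h).2.2.2
    · exact (hK _ h).2.2.2
    · exact hPa
    · exact hPa
    · exact hPb
  · intro x y hxy
    rcases (hG x y).1 hxy with h | (⟨rfl, rfl⟩ | ⟨h, hA, rfl⟩ | ⟨h, hA, rfl⟩) |
      (⟨rfl, rfl⟩ | ⟨h, hA, rfl⟩ | ⟨h, hA, rfl⟩)
    · have h1 := hlip x y h
      have h2 := (hR x y h).1
      unfold hS
      rw [h2] at h1 ⊢
      split_ifs <;> omega
    · omega
    · rw [hsA x h hA]; omega
    · rw [hsB x h hA]; omega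
    · omega
    · omega
    · omega
  · intro x hx hxa
    obtain ⟨h1, h2⟩ := hρ x hx
    by_cases hxr : x = ρ x
    · rw [← hxr] at h1
      rcases h1 with rfl | rfl | h
      · exact absurd rfl hxa
      · exact ⟨a, hPa, (hG _ _).2 (by simp), by omega⟩
      · by_cases hA : A x
        · exact ⟨a, hPa, (hG _ _).2 (by simp [h, hA]), by rw [hsA x h hA, hsa]⟩
        · exact ⟨b, hPb, (hG _ _).2 (by simp [h, hA]), by rw [hsB x h hA, hsb]⟩
    · obtain ⟨y, hy, hd⟩ := dist_nbr R _ x h2 hxr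
      refine ⟨y, (hR y x hy.symm).2, (hG _ _).2 (Or.inl hy), ?_⟩
      have h3 := (hR x y hy).1
      unfold hS
      rw [h3] at hd ⊢
      split_ifs <;> omega
  · intro x y hxy hx hy
    rcases (hG x y).1 hxy with h | (⟨rfl, rfl⟩ | ⟨h, hA, rfl⟩ | ⟨h, hA, rfl⟩) |
      (⟨rfl, rfl⟩ | ⟨h, hA, rfl⟩ | ⟨h, hA, rfl⟩)
    · unfold cS
      rw [(hR x y h).1]
    · exact absurd rfl hy
    · exact absurd rfl hy
    · obtain ⟨h1, h2, h3, h4⟩ := hK _ h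
      simp [cS, h1, h2, h3, hA, hρb, hab.symm]
    · exact absurd rfl hx
    · exact absurd rfl hx
    · obtain ⟨h1, h2, h3, h4⟩ := hK _ h
      simp [cS, h1, h2, h3, hA, hρb, hab.symm]
  · intro x hxa
    rcases (hG x a).1 hxa with h | (⟨rfl, h⟩ | ⟨h, hA, h'⟩ | ⟨h, hA, h'⟩) |
      (⟨h, rfl⟩ | ⟨h, hA, h'⟩ | ⟨h, hA, h'⟩)
    · have := (hR x a h).1
      rw [hρa] at this
      simp only [cS, this, if_true]
      exact (hq x h.symm).symm
    · simp [cS, hρb, hab.symm]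
    · obtain ⟨h1, h2, h3, h4⟩ := hK _ h
      simp [cS, h1, h2, h3, hA]
    · exact absurd h' hab
    · exact absurd h hab
    · exact absurd rfl (hK _ h).2.1
    · exact absurd rfl (hK _ h).2.1

/-- pointwise difference -/
def IndS {V : Type*} (R : SimpleGraph V) (ρ : V → V) (a b q : V) (P A : V → Prop) (k : ℕ)
    (s t : V) : Prop :=
  P s ∧ P t ∧ s ≠ a ∧ t ≠ a ∧ cS ρ a b q A s ≠ cS ρ a b q A t ∧
        hS R ρ a b A s + hS R ρ a b A t = k

def dS {V : Type*} (R : SimpleGraph V) (ρ : V → V) (v w q : V) (P A : V → Prop) (k : ℕ)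
    (s t : V) : ℚ :=
  (if IndS R ρ v w q P A k s t then 1 else 0) -
    (if IndS R ρ w v q P (fun x => ¬ A x) k s t then 1 else 0)



theorem dS_types {V : Type*} (R : SimpleGraph V) (ρ : V → V) (v w q : V) (A : V → Prop)
    (hvw : v ≠ w) (hqr : ∀ x, ρ x ≠ v → ρ x ≠ q) (hρv : ρ v = v)
    (hw : ∀ x, ρ x = w ↔ x = w) (x : V) :
    ((x = v) = True ∧ (x = w) = False ∧ cS ρ w v q (fun x => ¬ A x) x = v ∧
      hS R ρ w v (fun x => ¬ A x) x = 1) ∨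
    ((x = v) = False ∧ (x = w) = True ∧ cS ρ v w q A x = w ∧ hS R ρ v w A x = 1) ∨
    (∃ e, (x = v) = False ∧ (x = w) = False ∧ R.dist (ρ x) x = e ∧ ρ x = v ∧
      cS ρ v w q A x = q ∧ hS R ρ v w A x = e ∧ cS ρ w v q (fun x => ¬ A x) x = v ∧
      hS R ρ w v (fun x => ¬ A x) x = 1 + e) ∨
    (∃ r e, (x = v) = False ∧ (x = w) = False ∧ R.dist (ρ x) x = e ∧ ρ x = r ∧
      (r = v) = False ∧ (r = w) = False ∧ (r = q) = False ∧ A r ∧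
      cS ρ v w q A x = r ∧ hS R ρ v w A x = 1 + e ∧ cS ρ w v q (fun x => ¬ A x) x = v ∧
      hS R ρ w v (fun x => ¬ A x) x = 2 + e) ∨
    (∃ r e, (x = v) = False ∧ (x = w) = False ∧ R.dist (ρ x) x = e ∧ ρ x = r ∧
      (r = v) = False ∧ (r = w) = False ∧ (r = q) = False ∧ ¬ A r ∧
      cS ρ v w q A x = w ∧ hS R ρ v w A x = 2 + e ∧ cS ρ w v q (fun x => ¬ A x) x = r ∧
      hS R ρ w v (fun x => ¬ A x) x = 1 + e) := by
  have hww := (hw w).2 rfl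
  by_cases h1 : x = v
  · left; subst h1; simp [hvw, cS, hS, hρv]
  by_cases h2 : x = w
  · right; left; subst h2; simp [hvw.symm, cS, hS, hww]
  have h3 : ρ x ≠ w := fun h => h2 ((hw x).1 h)
  by_cases h4 : ρ x = v
  · right; right; left; exact ⟨R.dist (ρ x) x, by simp [h1, h2, h4, cS, hS, hvw]⟩
  have h5 := hqr x h4
  by_cases h6 : A (ρ x)
  · right; right; right; left
    exact ⟨ρ x, R.dist (ρ x) x, by simp [h1, h2, h3, h4, h5, h6, cS, hS]⟩
  · right; right; right; right
    exact ⟨ρ x, R.dist (ρ x) x, by simp [h1, h2, h3, h4, h5, h6, cS, hS]⟩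

theorem dS_val {V : Type*} (R : SimpleGraph V) (ρ : V → V) (v w q : V) (P A : V → Prop)
    (hvw : v ≠ w) (hq : q ≠ w) (hqr : ∀ x, ρ x ≠ v → ρ x ≠ q) (hρv : ρ v = v)
    (hw : ∀ x, ρ x = w ↔ x = w) (k : ℕ) (s t : V) (hs : P s) (ht : P t) :
    dS R ρ v w q P A k s t =
      if s = v then
        (if t = v ∨ t = w ∨ ρ t = v then 0 else if A (ρ t) then 0 else
          if R.dist (ρ t) t + 2 = k then -1 else 0)
      else if s = w then
        (if t = v ∨ t = w then 0 else if ρ t = v then (if R.dist (ρ t) t + 1 = k then 1 else 0)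
          else if A (ρ t) then (if R.dist (ρ t) t + 2 = k then 1 else 0) else 0)
      else if ρ s = v then
        (if t = v then 0 else if t = w then (if R.dist (ρ s) s + 1 = k then 1 else 0) else
          if ρ t = v then 0 else if A (ρ t) then
            (if R.dist (ρ s) s + R.dist (ρ t) t + 1 = k then 1 else 0) else 0)
      else
        (if t = v then (if A (ρ s) then 0 else if R.dist (ρ s) s + 2 = k then -1 else 0)
        else if t = w then (if A (ρ s) then (if R.dist (ρ s) s + 2 = k then 1 else 0) else 0)
        else if ρ t = v then (if A (ρ s) then
            (if R.dist (ρ s) s + R.dist (ρ t) t + 1 = k then 1 else 0) else 0)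
        else if ρ s = ρ t then 0 else
          if R.dist (ρ s) s + R.dist (ρ t) t + 2 = k then
            (if A (ρ s) then (if A (ρ t) then 1 else 0) else (if A (ρ t) then 0 else -1)) else 0) := by
  have h1 := dS_types R ρ v w q A hvw hqr hρv hw s
  have h2 := dS_types R ρ v w q A hvw hqr hρv hw t
  have hwv := hvw.symm
  have hq' := hq.symm
  unfold dS IndS
  generalize cS ρ v w q A s = c1 at *
  generalize cS ρ v w q A t = c2 at *
  generalize hS R ρ v w A s = c3 at *
  generalize hS R ρ v w A t = c4 at *
  generalize cS ρ w v q (fun x => ¬ A x) s = c5 at *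
  generalize cS ρ w v q (fun x => ¬ A x) t = c6 at *
  generalize hS R ρ w v (fun x => ¬ A x) s = c7 at *
  generalize hS R ρ w v (fun x => ¬ A x) t = c8 at *
  generalize R.dist (ρ s) s = d1 at *
  generalize R.dist (ρ t) t = d2 at *
  generalize ρ s = r1 at *
  generalize ρ t = r2 at *
  simp only [hs, ht, true_and, ne_eq]
  rcases h1 with ⟨a1, a2, rfl, rfl⟩ | ⟨a1, a2, rfl, rfl⟩ | ⟨e, a1, a2, rfl, rfl, rfl, rfl, rfl, rfl⟩ |
    ⟨r, e, a1, a2, rfl, rfl, a3, a4, a5, a6, rfl, rfl, rfl, rfl⟩ |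
    ⟨r, e, a1, a2, rfl, rfl, a3, a4, a5, a6, rfl, rfl, rfl, rfl⟩ <;>
  rcases h2 with ⟨b1, b2, rfl, rfl⟩ | ⟨b1, b2, rfl, rfl⟩ | ⟨e, b1, b2, rfl, rfl, rfl, rfl, rfl, rfl⟩ |
    ⟨r, e, b1, b2, rfl, rfl, b3, b4, b5, b6, rfl, rfl, rfl, rfl⟩ |
    ⟨r, e, b1, b2, rfl, rfl, b3, b4, b5, b6, rfl, rfl, rfl, rfl⟩ <;>
  clear hqr hρv hw hs ht <;> grind


theorem dS_zero {V : Type*} (R : SimpleGraph V) (ρ : V → V) (v w q : V) (P A : V → Prop)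
    (k : ℕ) (s t : V) (h : ¬ (P s ∧ P t)) : dS R ρ v w q P A k s t = 0 := by
  have h1 : ¬ IndS R ρ v w q P A k s t := fun h' => h ⟨h'.1, h'.2.1⟩
  have h2 : ¬ IndS R ρ w v q P (fun x => ¬ A x) k s t := fun h' => h ⟨h'.1, h'.2.1⟩
  simp [dS, h1, h2]

theorem dS_mono {V : Type*} (R : SimpleGraph V) (ρ : V → V) (v w q : V) (P A A' : V → Prop)
    (hvw : v ≠ w) (hq : q ≠ w) (hqr : ∀ x, ρ x ≠ v → ρ x ≠ q) (hρv : ρ v = v)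
    (hw : ∀ x, ρ x = w ↔ x = w)
    (hAA : ∀ x, A x → A' x) (k : ℕ) (s t : V) :
    dS R ρ v w q P A k s t ≤ dS R ρ v w q P A' k s t := by
  by_cases h : P s ∧ P t
  · rw [dS_val R ρ v w q P A hvw hq hqr hρv hw k s t h.1 h.2,
      dS_val R ρ v w q P A' hvw hq hqr hρv hw k s t h.1 h.2]
    have e1 := hAA (ρ s)
    have e2 := hAA (ρ t)
    clear hqr hAA hw
    grind (splits := 20)
  · rw [dS_zero _ _ _ _ _ _ _ _ _ _ h, dS_zero _ _ _ _ _ _ _ _ _ _ h]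

theorem dS_compl {V : Type*} [DecidableEq V] (R : SimpleGraph V) (ρ : V → V) (v w q : V) (P A A' : V → Prop)
    (hvw : v ≠ w) (hq : q ≠ w) (hqr : ∀ x, ρ x ≠ v → ρ x ≠ q) (hρv : ρ v = v)
    (hw : ∀ x, ρ x = w ↔ x = w) (hPv : P v) (hPw : P w)
    (hAA : ∀ x, P x → ρ x ≠ v → ρ x ≠ w → (A' (ρ x) ↔ ¬ A (ρ x))) (k : ℕ) (s t : V) :
    0 ≤ dS R ρ v w q P A k s t + dS R ρ v w q P A' k (Equiv.swap v w s) (Equiv.swap v w t) := by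
  have hsw : ∀ x, P (Equiv.swap v w x) ↔ P x := by
    intro x
    rw [Equiv.swap_apply_def]
    grind
  by_cases h : P s ∧ P t
  · rw [dS_val R ρ v w q P A hvw hq hqr hρv hw k s t h.1 h.2,
      dS_val R ρ v w q P A' hvw hq hqr hρv hw k _ _ ((hsw s).2 h.1) ((hsw t).2 h.2)]
    have e1 := hAA _ h.1
    have e2 := hAA _ h.2
    have w1 := hw s
    have w2 := hw t
    have w3 := (hw w).2 rfl
    clear hqr hAA hw hsw
    rw [Equiv.swap_apply_def, Equiv.swap_apply_def]
    by_cases s1 : s = v <;> by_cases s2 : s = w <;> by_cases t1 : t = v <;> by_cases t2 : t = w <;>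
      simp only [s1, s2, t1, t2, if_true, if_false] <;> grind
  · rw [dS_zero _ _ _ _ _ _ _ _ _ _ h, dS_zero]
    · simp
    · rw [hsw, hsw]; exact h

theorem dS_nonneg {V : Type*} (R : SimpleGraph V) (ρ : V → V) (v w q : V) (P A : V → Prop)
    (hvw : v ≠ w) (hq : q ≠ w) (hqr : ∀ x, ρ x ≠ v → ρ x ≠ q) (hρv : ρ v = v)
    (hw : ∀ x, ρ x = w ↔ x = w)
    (hA : ∀ x, P x → ρ x ≠ v → ρ x ≠ w → A (ρ x)) (k : ℕ) (s t : V) :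
    0 ≤ dS R ρ v w q P A k s t := by
  by_cases h : P s ∧ P t
  · rw [dS_val R ρ v w q P A hvw hq hqr hρv hw k s t h.1 h.2]
    have e1 := hA _ h.1
    have e2 := hA _ h.2
    have w1 := hw s
    have w2 := hw t
    clear hqr hA hw
    grind
  · rw [dS_zero _ _ _ _ _ _ _ _ _ _ h]


/-- canonical parent function: `w` is a child of `v` and is a leaf -/
def CanonPF (n : ℕ) (v w : Fin (n+1)) (g : Fin (n+1) → Fin (n+1)) : Prop :=
  ValidPF n g ∧ g w = v ∧ ∀ t, g t ≠ w

def fA (n : ℕ) (g : Fin (n+1) → Fin (n+1)) (v w : Fin (n+1)) (A : Finset (Fin (n+1)))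
    (t : Fin (n+1)) : Fin (n+1) := if g t = v ∧ t ≠ w ∧ t ∉ A then w else g t

def RG (n : ℕ) (g : Fin (n+1) → Fin (n+1)) (v : Fin (n+1)) : SimpleGraph (Fin (n+1)) :=
  SimpleGraph.fromRel (fun s t => 2 ≤ t.val ∧ g t = s ∧ g t ≠ v)

def rho (n : ℕ) (g : Fin (n+1) → Fin (n+1)) (v : Fin (n+1)) (x : Fin (n+1)) : Fin (n+1) :=
  if g x = v then x else if h : 2 ≤ x.val ∧ (g x).val < x.val then rho n g v (g x) else v
termination_by x.val
decreasing_by exact h.2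

theorem rho_root (n : ℕ) (g : Fin (n+1) → Fin (n+1)) (v x : Fin (n+1)) (h : g x = v) :
    rho n g v x = x := by rw [rho]; simp [h]

theorem rho_step (n : ℕ) (g : Fin (n+1) → Fin (n+1)) (hg : ValidPF n g) (v x : Fin (n+1))
    (h : g x ≠ v) (hx : 2 ≤ x.val) : rho n g v x = rho n g v (g x) := by
  rw [rho]; simp [h, hx, (hg.2 x hx).2]

theorem rho_base (n : ℕ) (g : Fin (n+1) → Fin (n+1)) (v x : Fin (n+1))
    (h : g x ≠ v) (hx : x.val < 2) : rho n g v x = v := by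
  rw [rho]; simp [h, Nat.not_le.2 hx]

theorem fin_ind (n : ℕ) (p : Fin (n+1) → Prop)
    (H : ∀ x : Fin (n+1), (∀ y : Fin (n+1), y.val < x.val → p y) → p x) : ∀ x, p x := by
  have : ∀ m (x : Fin (n+1)), x.val = m → p x := by
    intro m
    induction m using Nat.strong_induction_on with
    | _ m ih =>
      intro x hx
      exact H x fun y hy => ih y.val (by omega) y rfl
  exact fun x => this _ x rfl

theorem valid_child (n : ℕ) (g : Fin (n+1) → Fin (n+1)) (hg : ValidPF n g) (v t : Fin (n+1))
    (hv : 1 ≤ v.val) (h : g t = v) : 2 ≤ t.val ∧ v.val < t.val := by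
  by_cases h2 : 2 ≤ t.val
  · have := (hg.2 t h2).2
    rw [h] at this
    exact ⟨h2, this⟩
  · have := hg.1 t (by omega)
    rw [h] at this
    omega

theorem rho_range (n : ℕ) (g : Fin (n+1) → Fin (n+1)) (hg : ValidPF n g) (v : Fin (n+1)) :
    ∀ x, rho n g v x = v ∨ g (rho n g v x) = v := by
  apply fin_ind
  intro x ih
  by_cases h : g x = v
  · rw [rho_root n g v x h]; exact Or.inr h
  · by_cases h2 : 2 ≤ x.val
    · rw [rho_step n g hg v x h h2]
      exact ih _ (hg.2 x h2).2
    · rw [rho_base n g v x h (by omega)]; exact Or.inl rfl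

theorem rho_le (n : ℕ) (g : Fin (n+1) → Fin (n+1)) (hg : ValidPF n g) (v : Fin (n+1))
    (hv : 1 ≤ v.val) : ∀ x : Fin (n+1), x.val ≤ v.val → rho n g v x = v := by
  apply fin_ind
  intro x ih hx
  have h : g x ≠ v := fun h => by have := valid_child n g hg v x hv h; omega
  by_cases h2 : 2 ≤ x.val
  · rw [rho_step n g hg v x h h2]
    have := (hg.2 x h2).2
    exact ih _ this (by omega)
  · exact rho_base n g v x h (by omega)

theorem rho_w (n : ℕ) (g : Fin (n+1) → Fin (n+1)) (v w : Fin (n+1)) (hg : CanonPF n v w g)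
    (hvw : v ≠ w) : ∀ x, rho n g v x = w ↔ x = w := by
  intro x
  constructor
  · revert x
    apply fin_ind
    intro x ih hx
    by_cases h : g x = v
    · rwa [rho_root n g v x h] at hx
    · by_cases h2 : 2 ≤ x.val
      · rw [rho_step n g hg.1 v x h h2] at hx
        exact absurd (ih _ (hg.1.2 x h2).2 hx) (hg.2.2 x)
      · rw [rho_base n g v x h (by omega)] at hx
        exact absurd hx hvw
  · rintro rfl
    exact rho_root n g v x hg.2.1

theorem RG_adj (n : ℕ) (g : Fin (n+1) → Fin (n+1)) (hg : ValidPF n g) (v x y : Fin (n+1)) :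
    (RG n g v).Adj x y ↔ (2 ≤ x.val ∧ g x = y ∧ g x ≠ v) ∨ (2 ≤ y.val ∧ g y = x ∧ g y ≠ v) := by
  unfold RG
  rw [SimpleGraph.fromRel_adj]
  constructor
  · rintro ⟨-, h | h⟩
    · exact Or.inr h
    · exact Or.inl h
  · rintro (h | h)
    · refine ⟨?_, Or.inr h⟩
      rintro rfl
      have := (hg.2 x h.1).2
      rw [h.2.1] at this
      omega
    · refine ⟨?_, Or.inl h⟩
      rintro rfl
      have := (hg.2 x h.1).2
      rw [h.2.1] at this
      omega

theorem RG_rho (n : ℕ) (g : Fin (n+1) → Fin (n+1)) (hg : ValidPF n g) (v x y : Fin (n+1))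
    (h : (RG n g v).Adj x y) : rho n g v x = rho n g v y ∧ 1 ≤ x.val := by
  rcases (RG_adj n g hg v x y).1 h with ⟨h1, rfl, h3⟩ | ⟨h1, rfl, h3⟩
  · exact ⟨rho_step n g hg v x h3 h1, by omega⟩
  · exact ⟨(rho_step n g hg v y h3 h1).symm, (hg.2 y h1).1⟩

theorem RG_reach_one (n : ℕ) (g : Fin (n+1) → Fin (n+1)) (hg : ValidPF n g) (v : Fin (n+1))
    (hv : 1 ≤ v.val) (o : Fin (n+1)) (ho : o.val = 1) :
    ∀ x : Fin (n+1), 1 ≤ x.val → x.val ≤ v.val → (RG n g v).Reachable o x := by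
  apply fin_ind
  intro x ih h1 hx
  by_cases h2 : 2 ≤ x.val
  · have hv2 := hg.2 x h2
    have h : g x ≠ v := fun h => by have := valid_child n g hg v x hv h; omega
    refine (ih (g x) hv2.2 hv2.1 (by omega)).trans ?_
    exact SimpleGraph.Adj.reachable ((RG_adj n g hg v _ _).2 (Or.inr ⟨h2, rfl, h⟩))
  · have : x = o := Fin.ext (by omega)
    rw [this]

theorem RG_reach (n : ℕ) (g : Fin (n+1) → Fin (n+1)) (hg : ValidPF n g) (v : Fin (n+1))
    (hv : 1 ≤ v.val) :
    ∀ x : Fin (n+1), 1 ≤ x.val → (RG n g v).Reachable (rho n g v x) x := by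
  apply fin_ind
  intro x ih h1
  by_cases h : g x = v
  · rw [rho_root n g v x h]
  · by_cases h2 : 2 ≤ x.val
    · have hv2 := hg.2 x h2
      rw [rho_step n g hg v x h h2]
      refine (ih (g x) hv2.2 hv2.1).trans ?_
      exact SimpleGraph.Adj.reachable ((RG_adj n g hg v _ _).2 (Or.inr ⟨h2, rfl, h⟩))
    · rw [rho_base n g v x h (by omega)]
      exact (RG_reach_one n g hg v hv x (by omega) v hv le_rfl).symm

theorem fA_valid (n : ℕ) (g : Fin (n+1) → Fin (n+1)) (v w : Fin (n+1)) (hg : CanonPF n v w g)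
    (hv : 1 ≤ v.val) (hw : w.val = v.val + 1) (A : Finset (Fin (n+1))) :
    ValidPF n (fA n g v w A) := by
  obtain ⟨hg, h1, h2⟩ := hg
  constructor
  · intro t ht
    unfold fA
    split_ifs with h
    · have := valid_child n g hg v t hv h.1; omega
    · exact hg.1 t ht
  · intro t ht
    unfold fA
    split_ifs with h
    · have := valid_child n g hg v t hv h.1
      have h3 : t.val ≠ w.val := fun h' => h.2.1 (Fin.ext h')
      omega
    · exact hg.2 t ht

theorem tree_adj (n : ℕ) (g : Fin (n+1) → Fin (n+1)) (hg : ValidPF n g) (x y : Fin (n+1)) :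
    (treeGraphPF n g).Adj x y ↔ (2 ≤ x.val ∧ g x = y) ∨ (2 ≤ y.val ∧ g y = x) := by
  unfold treeGraphPF
  rw [SimpleGraph.fromRel_adj]
  constructor
  · rintro ⟨-, h | h⟩
    · exact Or.inr h
    · exact Or.inl h
  · rintro (h | h)
    · refine ⟨?_, Or.inr h⟩
      rintro rfl
      have := (hg.2 x h.1).2
      rw [h.2] at this
      omega
    · refine ⟨?_, Or.inl h⟩
      rintro rfl
      have := (hg.2 x h.1).2
      rw [h.2] at this
      omega

theorem fA_edge (n : ℕ) (g : Fin (n+1) → Fin (n+1)) (v w : Fin (n+1)) (hg : CanonPF n v w g)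
    (hv : 1 ≤ v.val) (hw : w.val = v.val + 1) (A : Finset (Fin (n+1))) (x y : Fin (n+1)) :
    (2 ≤ x.val ∧ fA n g v w A x = y) ↔ (2 ≤ x.val ∧ g x = y ∧ g x ≠ v) ∨
      ((x = w ∧ y = v) ∨ ((g x = v ∧ x ≠ w) ∧ x ∈ A ∧ y = v) ∨
        ((g x = v ∧ x ≠ w) ∧ x ∉ A ∧ y = w)) := by
  obtain ⟨hg, h1, h2⟩ := hg
  have h3 : g x = v → 2 ≤ x.val := fun h => (valid_child n g hg v x hv h).1
  have h4 : x = w → g x = v := by rintro rfl; exact h1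
  unfold fA
  by_cases e1 : g x = v <;> by_cases e2 : x = w <;> by_cases e3 : x ∈ A <;> grind

theorem prop_shuf (R a b c d e f a' d' : Prop) (h1 : d ↔ a') (h2 : a ↔ d') :
    (R ∨ (a ∨ b ∨ c) ∨ (d ∨ e ∨ f)) ↔ (R ∨ (a' ∨ c ∨ b) ∨ (d' ∨ f ∨ e)) := by
  rw [← h1, ← h2]
  tauto

theorem fA_interior (n : ℕ) (g : Fin (n+1) → Fin (n+1)) (v w : Fin (n+1)) (hg : CanonPF n v w g)
    (hv : 1 ≤ v.val) (hw : w.val = v.val + 1) (A : Finset (Fin (n+1)))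
    (k : ℕ) (hk : 2 ≤ k) (s t : Fin (n+1)) :
    (((treeGraphPF n (fA n g v w A)).dist s t = k ∧
      IsInterior (treeGraphPF n (fA n g v w A)) v s t) ↔
      IndS (RG n g v) (rho n g v) v w (g v) (fun x => 1 ≤ x.val) (fun x => x ∈ A) k s t) ∧
    (((treeGraphPF n (fA n g v w A)).dist s t = k ∧
      IsInterior (treeGraphPF n (fA n g v w A)) w s t) ↔
      IndS (RG n g v) (rho n g v) w v (g v) (fun x => 1 ≤ x.val) (fun x => ¬ x ∈ A) k s t) := by
  have hvw : v ≠ w := fun h => by rw [h] at hw; omega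
  have hg' := hg
  obtain ⟨hg, h1, h2⟩ := hg
  have hadj : ∀ x y, (treeGraphPF n (fA n g v w A)).Adj x y ↔ (RG n g v).Adj x y ∨
      ((x = w ∧ y = v) ∨ ((g x = v ∧ x ≠ w) ∧ x ∈ A ∧ y = v) ∨
        ((g x = v ∧ x ≠ w) ∧ x ∉ A ∧ y = w)) ∨
      ((y = w ∧ x = v) ∨ ((g y = v ∧ y ≠ w) ∧ y ∈ A ∧ x = v) ∨
        ((g y = v ∧ y ≠ w) ∧ y ∉ A ∧ x = w)) := by
    intro x y
    rw [tree_adj n _ (fA_valid n g v w hg' hv hw A), RG_adj n g hg,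
      fA_edge n g v w hg' hv hw, fA_edge n g v w hg' hv hw]
    exact or_or_or_comm
  have hρv := rho_le n g hg v hv v le_rfl
  have hρw := rho_root n g v w h1
  have hK : ∀ c, (g c = v ∧ c ≠ w) → rho n g v c = c ∧ c ≠ v ∧ c ≠ w ∧ 1 ≤ c.val := by
    rintro c ⟨hc, hcw⟩
    have := valid_child n g hg v c hv hc
    refine ⟨rho_root n g v c hc, ?_, hcw, by omega⟩
    rintro rfl
    omega
  have hρ : ∀ x : Fin (n+1), 1 ≤ x.val → (rho n g v x = v ∨ rho n g v x = w ∨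
      (g (rho n g v x) = v ∧ rho n g v x ≠ w)) ∧ (RG n g v).Reachable (rho n g v x) x := by
    intro x hx
    refine ⟨?_, RG_reach n g hg v hv x hx⟩
    rcases rho_range n g hg v x with h | h
    · exact Or.inl h
    · by_cases h' : rho n g v x = w
      · exact Or.inr (Or.inl h')
      · exact Or.inr (Or.inr ⟨h, h'⟩)
  constructor
  · refine star_interior _ (RG n g v) (rho n g v) v w (g v) (fun x => 1 ≤ x.val)
      (fun c => g c = v ∧ c ≠ w) (fun x => x ∈ A) hadj hvw hρv hρw hK
      (RG_rho n g hg v) hρ hv (by omega) ?_ k hk s t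
    intro x hx
    rcases (RG_adj n g hg v _ _).1 hx with ⟨a, b, c⟩ | ⟨a, b, c⟩
    · exact b.symm
    · exact absurd b c
  · refine star_interior _ (RG n g v) (rho n g v) w v (g v) (fun x => 1 ≤ x.val)
      (fun c => g c = v ∧ c ≠ w) (fun x => ¬ x ∈ A) ?_ hvw.symm hρw hρv ?_
      (RG_rho n g hg v) ?_ (by omega) hv ?_ k hk s t
    · intro x y
      rw [hadj]
      simp only [not_not]
      exact prop_shuf _ _ _ _ _ _ _ _ _ and_comm and_comm
    · intro c hc
      obtain ⟨a1, a2, a3, a4⟩ := hK c hc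
      exact ⟨a1, a3, a2, a4⟩
    · intro x hx
      obtain ⟨a1, a2⟩ := hρ x hx
      exact ⟨or_left_comm.1 a1, a2⟩
    · intro x hx
      rcases (RG_adj n g hg v _ _).1 hx with ⟨a, b, c⟩ | ⟨a, b, c⟩
      · exact absurd h1 c
      · exact absurd b (h2 x)


/-- ordered pair count -/
def NN (n : ℕ) (f : Fin (n+1) → Fin (n+1)) (k : ℕ) (v : Fin (n+1)) : ℕ :=
  (Finset.univ.filter (fun p : Fin (n+1) × Fin (n+1) =>
    (treeGraphPF n f).dist p.1 p.2 = k ∧ IsInterior (treeGraphPF n f) v p.1 p.2)).card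

theorem interior_symm {V : Type*} (G : SimpleGraph V) (v s t : V) (h : IsInterior G v s t) :
    IsInterior G v t s := by
  obtain ⟨h1, h2, h3⟩ := h
  refine ⟨h2, h1, ?_⟩
  rw [G.dist_comm (u := t) (v := v), G.dist_comm (u := v) (v := s), G.dist_comm (u := t) (v := s)]
  omega

theorem pexact_eq (n : ℕ) (f : Fin (n+1) → Fin (n+1)) (k : ℕ) (hk : 2 ≤ k) (v : Fin (n+1)) :
    (pexactPF n f k v : ℚ) = (NN n f k v : ℚ) / 2 := by
  have h : 2 ∣ NN n f k v := by
    unfold NN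
    set F := (Finset.univ.filter (fun p : Fin (n+1) × Fin (n+1) =>
      (treeGraphPF n f).dist p.1 p.2 = k ∧ IsInterior (treeGraphPF n f) v p.1 p.2)) with hF
    have h1 : (F.filter (fun p => p.1 < p.2)).card = (F.filter (fun p => ¬ p.1 < p.2)).card := by
      apply Finset.card_bij (fun p _ => (p.2, p.1))
      · intro p hp
        simp only [hF, Finset.mem_filter, Finset.mem_univ, true_and] at hp ⊢
        refine ⟨⟨?_, interior_symm _ _ _ _ hp.1.2⟩, not_lt.2 hp.2.le⟩
        rw [SimpleGraph.dist_comm]; exact hp.1.1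
      · rintro ⟨a, b⟩ _ ⟨c, d⟩ _ h
        simp only [Prod.mk.injEq] at h ⊢
        exact ⟨h.2, h.1⟩
      · intro p hp
        simp only [hF, Finset.mem_filter, Finset.mem_univ, true_and] at hp
        refine ⟨(p.2, p.1), ?_, rfl⟩
        simp only [hF, Finset.mem_filter, Finset.mem_univ, true_and]
        refine ⟨⟨?_, interior_symm _ _ _ _ hp.1.2⟩, ?_⟩
        · rw [SimpleGraph.dist_comm]; exact hp.1.1
        · refine lt_of_le_of_ne (not_lt.1 hp.2) ?_
          intro h
          have := hp.1.1
          rw [h, SimpleGraph.dist_self] at this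
          omega
    have h2 := Finset.card_filter_add_card_filter_not (s := F) (fun p => p.1 < p.2)
    omega
  have : pexactPF n f k v = NN n f k v / 2 := rfl
  rw [this, Nat.cast_div h (by norm_num)]
  norm_num

def DD (n : ℕ) (f : Fin (n+1) → Fin (n+1)) (k : ℕ) (v w : Fin (n+1)) : ℚ :=
  (NN n f k v : ℚ) - NN n f k w

theorem DD_fA (n : ℕ) (g : Fin (n+1) → Fin (n+1)) (v w : Fin (n+1)) (hg : CanonPF n v w g)
    (hv : 1 ≤ v.val) (hw : w.val = v.val + 1) (A : Finset (Fin (n+1)))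
    (k : ℕ) (hk : 2 ≤ k) :
    DD n (fA n g v w A) k v w = ∑ p : Fin (n+1) × Fin (n+1),
      dS (RG n g v) (rho n g v) v w (g v) (fun x => 1 ≤ x.val) (fun x => x ∈ A) k p.1 p.2 := by
  unfold DD NN dS
  rw [Finset.sum_sub_distrib, Finset.card_filter, Finset.card_filter]
  push_cast
  congr 1
  · apply Finset.sum_congr rfl
    intro p _
    simp only [(fA_interior n g v w hg hv hw A k hk p.1 p.2).1]
  · apply Finset.sum_congr rfl
    intro p _
    simp only [(fA_interior n g v w hg hv hw A k hk p.1 p.2).2]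

/-- the hypotheses of the pointwise lemmas -/
theorem canon_facts (n : ℕ) (g : Fin (n+1) → Fin (n+1)) (v w : Fin (n+1)) (hg : CanonPF n v w g)
    (hv : 1 ≤ v.val) (hw : w.val = v.val + 1) :
    v ≠ w ∧ g v ≠ w ∧ (∀ x, rho n g v x ≠ v → rho n g v x ≠ g v) ∧ rho n g v v = v ∧
    (∀ x, rho n g v x = w ↔ x = w) := by
  have hvw : v ≠ w := fun h => by rw [h] at hw; omega
  refine ⟨hvw, hg.2.2 v, ?_, rho_le n g hg.1 v hv v le_rfl, rho_w n g v w hg hvw⟩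
  intro x hx h
  rcases rho_range n g hg.1 v x with h1 | h1
  · exact hx h1
  · have h2 := valid_child n g hg.1 v _ hv h1
    rw [h] at h2
    have := hg.1.2 v
    have := hg.1.1 v
    omega

def SS (n : ℕ) (g : Fin (n+1) → Fin (n+1)) (v w : Fin (n+1)) : Finset (Fin (n+1)) :=
  Finset.univ.filter (fun t => g t = v ∧ t ≠ w)

theorem DD_mono (n : ℕ) (g : Fin (n+1) → Fin (n+1)) (v w : Fin (n+1)) (hg : CanonPF n v w g)
    (hv : 1 ≤ v.val) (hw : w.val = v.val + 1) (k : ℕ) (hk : 2 ≤ k) :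
    Monotone (fun A => DD n (fA n g v w A) k v w) := by
  intro A B hAB
  obtain ⟨h1, h2, h3, h4, h5⟩ := canon_facts n g v w hg hv hw
  simp only [DD_fA n g v w hg hv hw _ k hk]
  apply Finset.sum_le_sum
  intro p _
  exact dS_mono _ _ _ _ _ _ _ _ h1 h2 h3 h4 h5 (fun x hx => hAB hx) k p.1 p.2

theorem mem_SS_rho (n : ℕ) (g : Fin (n+1) → Fin (n+1)) (v w : Fin (n+1)) (hg : CanonPF n v w g)
    (x : Fin (n+1)) (h1 : rho n g v x ≠ v) (h2 : rho n g v x ≠ w) : rho n g v x ∈ SS n g v w := by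
  rcases rho_range n g hg.1 v x with h | h
  · exact absurd h h1
  · simp [SS, h, h2]

theorem DD_compl (n : ℕ) (g : Fin (n+1) → Fin (n+1)) (v w : Fin (n+1)) (hg : CanonPF n v w g)
    (hv : 1 ≤ v.val) (hw : w.val = v.val + 1) (k : ℕ) (hk : 2 ≤ k) (A : Finset (Fin (n+1))) :
    0 ≤ DD n (fA n g v w A) k v w + DD n (fA n g v w (SS n g v w \ A)) k v w := by
  obtain ⟨h1, h2, h3, h4, h5⟩ := canon_facts n g v w hg hv hw
  rw [DD_fA n g v w hg hv hw _ k hk, DD_fA n g v w hg hv hw _ k hk]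
  rw [← Equiv.sum_comp (Equiv.prodCongr (Equiv.swap v w) (Equiv.swap v w)) (fun p =>
    dS (RG n g v) (rho n g v) v w (g v) (fun x => 1 ≤ x.val)
      (fun x => x ∈ SS n g v w \ A) k p.1 p.2), ← Finset.sum_add_distrib]
  apply Finset.sum_nonneg
  intro p _
  refine dS_compl _ _ _ _ _ _ _ _ h1 h2 h3 h4 h5 hv (by omega) ?_ k p.1 p.2
  intro x _ hx1 hx2
  have := mem_SS_rho n g v w hg x hx1 hx2
  simp [this]

theorem DD_pos (n : ℕ) (g : Fin (n+1) → Fin (n+1)) (v w : Fin (n+1)) (hg : CanonPF n v w g)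
    (hv : 1 ≤ v.val) (hw : w.val = v.val + 1) (k : ℕ) (hk : 2 ≤ k) (x : Fin (n+1))
    (hx : 1 ≤ x.val) (hxv : x ≠ v) (hxw : x ≠ w)
    (hd : (rho n g v x = v ∧ (RG n g v).dist v x + 1 = k) ∨
      (rho n g v x ≠ v ∧ (RG n g v).dist (rho n g v x) x + 2 = k)) :
    0 < DD n (fA n g v w (SS n g v w)) k v w := by
  obtain ⟨h1, h2, h3, h4, h5⟩ := canon_facts n g v w hg hv hw
  rw [DD_fA n g v w hg hv hw _ k hk]
  refine Finset.sum_pos' ?_ ⟨(w, x), Finset.mem_univ _, ?_⟩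
  · intro p _
    exact dS_nonneg _ _ _ _ _ _ _ h1 h2 h3 h4 h5
      (fun y _ hy1 hy2 => mem_SS_rho n g v w hg y hy1 hy2) k p.1 p.2
  · rw [dS_val _ _ _ _ _ _ _ h1 h2 h3 h4 h5 k _ _ (by simp only; omega) hx]
    have h6 : rho n g v x ≠ w := fun h => hxw ((h5 x).1 h)
    rcases hd with ⟨e1, e2⟩ | ⟨e1, e2⟩
    · simp [h1.symm, hxv, hxw, e1, e2]
    · simp [h1.symm, hxv, hxw, e1, e2, mem_SS_rho n g v w hg x e1 h6]

/-- number of children -/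
def cnt (n : ℕ) (f : Fin (n+1) → Fin (n+1)) (u : Fin (n+1)) : ℕ :=
  (Finset.univ.filter (fun s : Fin (n+1) => 2 ≤ s.val ∧ f s = u)).card

theorem prod_rank {α : Type*} [LinearOrder α] (X : Finset α) :
    ∏ t ∈ X, (X.filter (fun s => s ≤ t)).card = X.card.factorial := by
  induction X using Finset.induction_on_max with
  | empty => simp
  | insert a X hX ih =>
    have ha : a ∉ X := fun h => lt_irrefl _ (hX a h)
    rw [Finset.prod_insert ha, Finset.card_insert_of_notMem ha, Nat.factorial_succ, ← ih]
    congr 1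
    · rw [Finset.filter_true_of_mem, Finset.card_insert_of_notMem ha]
      intro x hx
      rcases Finset.mem_insert.1 hx with rfl | h
      · exact le_rfl
      · exact (hX x h).le
    · apply Finset.prod_congr rfl
      intro t ht
      rw [Finset.filter_insert, if_neg (not_le.2 (hX t ht))]

def ZZ (n : ℕ) : ℚ := ∏ t ∈ Finset.univ.filter (fun t : Fin (n+1) => 2 ≤ t.val), (2 * (t.val : ℚ) - 3)

theorem ZZ_pos (n : ℕ) : 0 < ZZ n := by
  apply Finset.prod_pos
  intro t ht
  have h : 2 ≤ t.val := (Finset.mem_filter.1 ht).2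
  have : (2:ℚ) ≤ t.val := by exact_mod_cast h
  linarith

theorem prob_eq (n : ℕ) (f : Fin (n+1) → Fin (n+1)) :
    probPF n f = (∏ u : Fin (n+1), ((cnt n f u).factorial : ℚ)) / ZZ n := by
  unfold probPF ZZ
  rw [Finset.prod_div_distrib]
  congr 1
  rw [← Finset.prod_fiberwise (Finset.univ.filter (fun t : Fin (n+1) => 2 ≤ t.val)) f]
  apply Finset.prod_congr rfl
  intro u _
  unfold cnt
  rw [← prod_rank]
  push_cast
  rw [Finset.filter_filter]
  apply Finset.prod_congr rfl
  intro t ht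
  simp only [Finset.mem_filter, Finset.mem_univ, true_and] at ht
  norm_cast
  unfold degPF
  rw [ht.2, Finset.filter_filter, add_comm]
  have : Finset.univ.filter (fun s : Fin (n+1) => (2 ≤ s.val ∧ f s = u) ∧ s ≤ t) =
      insert t (Finset.univ.filter (fun s : Fin (n+1) => 2 ≤ s.val ∧ s.val ≤ t.val - 1 ∧ f s = u)) := by
    ext s
    simp only [Finset.mem_filter, Finset.mem_univ, true_and, Finset.mem_insert, Fin.le_def]
    constructor
    · rintro ⟨⟨h1, h2⟩, h3⟩
      by_cases h : s = t
      · exact Or.inl h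
      · have : s.val ≠ t.val := fun h' => h (Fin.ext h')
        exact Or.inr ⟨h1, by omega, h2⟩
    · rintro (rfl | ⟨h1, h2, h3⟩)
      · exact ⟨ht, le_rfl⟩
      · exact ⟨⟨h1, h3⟩, by omega⟩
  rw [this, Finset.card_insert_of_notMem]
  simp only [Finset.mem_filter, Finset.mem_univ, true_and]
  omega


theorem fact_aux (i a d : ℕ) (h : i ≤ a) :
    a.factorial * (i + d).factorial ≤ i.factorial * (a + d).factorial := by
  induction d with
  | zero => simp [mul_comm]
  | succ d ih =>
    rw [← add_assoc, ← add_assoc, Nat.factorial_succ, Nat.factorial_succ]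
    calc a.factorial * ((i + d + 1) * (i + d).factorial)
        = (i + d + 1) * (a.factorial * (i + d).factorial) := by ring
      _ ≤ (a + d + 1) * (i.factorial * (a + d).factorial) := by gcongr
      _ = _ := by ring

theorem fact_aux2 (i a b u : ℕ) (h1 : i ≤ a) (h2 : i ≤ b) (h : a + b = i + u) :
    a.factorial * b.factorial ≤ i.factorial * u.factorial := by
  obtain ⟨d, rfl⟩ := Nat.exists_eq_add_of_le h2
  have : u = a + d := by omega
  subst this
  exact fact_aux i a d h1

def muA {α : Type*} [DecidableEq α] (S A : Finset α) : ℚ :=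
  if A ⊆ S then ((A.card.factorial * (S.card - A.card).factorial : ℕ) : ℚ) else 0

theorem muA_nonneg {α : Type*} [DecidableEq α] (S : Finset α) : 0 ≤ muA S := by
  intro A
  unfold muA
  split_ifs
  · exact Nat.cast_nonneg _
  · exact le_rfl

theorem muA_fkg {α : Type*} [DecidableEq α] (S A B : Finset α) :
    muA S A * muA S B ≤ muA S (A ⊓ B) * muA S (A ⊔ B) := by
  by_cases h : A ⊆ S ∧ B ⊆ S
  · have h1 : A ⊓ B ⊆ S := fun x hx => h.1 (Finset.mem_inter.1 hx).1
    have h2 : A ⊔ B ⊆ S := Finset.union_subset h.1 h.2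
    unfold muA
    rw [if_pos h.1, if_pos h.2, if_pos h1, if_pos h2]
    norm_cast
    have e1 : (A ⊓ B).card ≤ A.card := Finset.card_le_card Finset.inter_subset_left
    have e2 : (A ⊓ B).card ≤ B.card := Finset.card_le_card Finset.inter_subset_right
    have e3 : (A ⊔ B).card + (A ⊓ B).card = A.card + B.card := Finset.card_union_add_card_inter A B
    have e4 := Finset.card_le_card h2
    have k1 := fact_aux2 (A ⊓ B).card A.card B.card (A ⊔ B).card e1 e2 (by omega)
    have k2 := fact_aux2 (S.card - (A ⊔ B).card) (S.card - A.card) (S.card - B.card)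
      (S.card - (A ⊓ B).card) (by omega) (by omega) (by omega)
    calc _ = (A.card.factorial * B.card.factorial) *
          ((S.card - A.card).factorial * (S.card - B.card).factorial) := by ring
      _ ≤ _ := Nat.mul_le_mul k1 k2
      _ = _ := by ring
  · have : muA S A * muA S B = 0 := by
      unfold muA
      by_cases hA : A ⊆ S
      · rw [if_neg (fun hB => h ⟨hA, hB⟩)]; simp
      · rw [if_neg hA]; simp
    rw [this]
    exact mul_nonneg (muA_nonneg S _) (muA_nonneg S _)

theorem sum_muA {α : Type*} [DecidableEq α] [Fintype α] (S : Finset α) (F : Finset α → ℚ) :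
    ∑ A, muA S A * F A =
      ∑ A ∈ S.powerset, ((A.card.factorial * (S.card - A.card).factorial : ℕ) : ℚ) * F A := by
  have : S.powerset = Finset.univ.filter (fun A => A ⊆ S) := by ext; simp
  rw [this, Finset.sum_filter]
  apply Finset.sum_congr rfl
  intro A _
  unfold muA
  split_ifs <;> simp

theorem sum_compl {α : Type*} [DecidableEq α] [Fintype α] (S : Finset α) (F : Finset α → ℚ)
    (hF : ∀ A, 0 ≤ F A + F (S \ A)) : 0 ≤ ∑ A, muA S A * F A := by
  have h : ∑ A, muA S A * F A = ∑ A, muA S A * F (S \ A) := by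
    rw [sum_muA S F, sum_muA S (fun A => F (S \ A))]
    refine Finset.sum_bij' (fun A _ => S \ A) (fun A _ => S \ A) ?_ ?_ ?_ ?_ ?_
    · intro A _; simp
    · intro A _; simp
    · intro A hA
      exact Finset.sdiff_sdiff_eq_self (Finset.mem_powerset.1 hA)
    · intro A hA
      exact Finset.sdiff_sdiff_eq_self (Finset.mem_powerset.1 hA)
    · intro A hA
      have hA := Finset.mem_powerset.1 hA
      rw [Finset.sdiff_sdiff_eq_self hA, Finset.card_sdiff_of_subset hA]
      have := Finset.card_le_card hA
      rw [show S.card - (S.card - A.card) = A.card by omega, Nat.mul_comm]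
  have h2 : 0 ≤ ∑ A, muA S A * (F A + F (S \ A)) :=
    Finset.sum_nonneg fun A _ => mul_nonneg (muA_nonneg S A) (hF A)
  simp only [mul_add, Finset.sum_add_distrib] at h2
  linarith

theorem fkg_app {α : Type*} [DecidableEq α] [Fintype α] (S : Finset α) (F : Finset α → ℚ)
    (hm : Monotone F) (hF : ∀ A, 0 ≤ F A + F (S \ A)) :
    0 ≤ ∑ A, muA S A * ((A.card + 1 : ℚ) * F A) := by
  have key := fkg (α := Finset α) (μ := muA S) (f := fun A => (A.card + 1 : ℚ))
    (g := fun A => F A - F ∅) (muA_nonneg S) (fun A => by positivity)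
    (fun A => sub_nonneg.2 (hm (Finset.empty_subset A)))
    (fun A B h => by
      have : (A.card : ℚ) ≤ B.card := by exact_mod_cast Finset.card_le_card h
      simpa using this)
    (fun A B h => sub_le_sub_right (hm h) _) (muA_fkg S)
  have h0 := sum_compl S F hF
  have h1 : 0 < ∑ A, muA S A := by
    refine Finset.sum_pos' (fun A _ => muA_nonneg S A) ⟨∅, Finset.mem_univ _, ?_⟩
    simp [muA, Nat.factorial_pos]
  have h2 : 0 ≤ ∑ A, muA S A * (A.card + 1 : ℚ) :=
    Finset.sum_nonneg fun A _ => mul_nonneg (muA_nonneg S A) (by positivity)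
  have e1 : ∑ A, muA S A * (F A - F ∅) = ∑ A, muA S A * F A - (∑ A, muA S A) * F ∅ := by
    rw [Finset.sum_mul, ← Finset.sum_sub_distrib]
    exact Finset.sum_congr rfl fun A _ => by ring
  have e2 : ∑ A, muA S A * ((A.card + 1 : ℚ) * (F A - F ∅)) =
      ∑ A, muA S A * ((A.card + 1 : ℚ) * F A) - (∑ A, muA S A * (A.card + 1 : ℚ)) * F ∅ := by
    rw [Finset.sum_mul, ← Finset.sum_sub_distrib]
    exact Finset.sum_congr rfl fun A _ => by ring
  rw [e1, e2] at key
  have h3 := mul_nonneg h2 h0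
  have h4 : 0 ≤ (∑ A, muA S A) * ∑ A, muA S A * ((A.card + 1 : ℚ) * F A) := by nlinarith
  exact nonneg_of_mul_nonneg_right h4 h1

theorem cnt_v (n : ℕ) (g : Fin (n+1) → Fin (n+1)) (v w : Fin (n+1)) (hg : CanonPF n v w g)
    (hv : 1 ≤ v.val) (hw : w.val = v.val + 1) (A : Finset (Fin (n+1))) (hA : A ⊆ SS n g v w) :
    cnt n (fA n g v w A) v = A.card + 1 := by
  have hvw : v ≠ w := fun h => by rw [h] at hw; omega
  have hwA : w ∉ A := fun h => by have := hA h; simp [SS] at this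
  unfold cnt
  rw [← Finset.card_insert_of_notMem hwA]
  congr 1
  ext t
  have h1 : t ∈ A → g t = v ∧ t ≠ w := fun h => by simpa [SS] using hA h
  have h2 : g t = v → 2 ≤ t.val := fun h => (valid_child n g hg.1 v t hv h).1
  have h3 : t = w → g t = v := by rintro rfl; exact hg.2.1
  simp only [Finset.mem_filter, Finset.mem_univ, true_and, Finset.mem_insert, fA]
  grind

theorem cnt_w (n : ℕ) (g : Fin (n+1) → Fin (n+1)) (v w : Fin (n+1)) (hg : CanonPF n v w g)
    (hv : 1 ≤ v.val) (hw : w.val = v.val + 1) (A : Finset (Fin (n+1))) (hA : A ⊆ SS n g v w) :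
    cnt n (fA n g v w A) w = (SS n g v w).card - A.card := by
  unfold cnt
  rw [← Finset.card_sdiff_of_subset hA]
  congr 1
  ext t
  have h2 : g t = v → 2 ≤ t.val := fun h => (valid_child n g hg.1 v t hv h).1
  have h3 := hg.2.2 t
  simp only [Finset.mem_filter, Finset.mem_univ, true_and, Finset.mem_sdiff, fA, SS]
  grind

theorem cnt_u (n : ℕ) (g : Fin (n+1) → Fin (n+1)) (v w : Fin (n+1))
    (A : Finset (Fin (n+1))) (u : Fin (n+1)) (h1 : u ≠ v) (h2 : u ≠ w) :
    cnt n (fA n g v w A) u = cnt n g u := by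
  unfold cnt
  congr 1
  ext t
  simp only [Finset.mem_filter, Finset.mem_univ, true_and, fA]
  grind

def QQ (n : ℕ) (g : Fin (n+1) → Fin (n+1)) (v w : Fin (n+1)) : ℚ :=
  (∏ u ∈ (Finset.univ.erase v).erase w, ((cnt n g u).factorial : ℚ)) / ZZ n

theorem QQ_pos (n : ℕ) (g : Fin (n+1) → Fin (n+1)) (v w : Fin (n+1)) : 0 < QQ n g v w := by
  apply div_pos _ (ZZ_pos n)
  apply Finset.prod_pos
  intro u _
  exact_mod_cast Nat.factorial_pos _

theorem prob_fA (n : ℕ) (g : Fin (n+1) → Fin (n+1)) (v w : Fin (n+1)) (hg : CanonPF n v w g)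
    (hv : 1 ≤ v.val) (hw : w.val = v.val + 1) (A : Finset (Fin (n+1))) (hA : A ⊆ SS n g v w) :
    probPF n (fA n g v w A) = QQ n g v w * (((A.card.factorial *
      ((SS n g v w).card - A.card).factorial : ℕ) : ℚ) * (A.card + 1)) := by
  have hvw : v ≠ w := fun h => by rw [h] at hw; omega
  rw [prob_eq, ← Finset.mul_prod_erase _ _ (Finset.mem_univ v),
    ← Finset.mul_prod_erase (Finset.univ.erase v) _ (a := w) (by simp [hvw.symm]),
    cnt_v n g v w hg hv hw A hA, cnt_w n g v w hg hv hw A hA]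
  have : ∏ u ∈ (Finset.univ.erase v).erase w, ((cnt n (fA n g v w A) u).factorial : ℚ) =
      ∏ u ∈ (Finset.univ.erase v).erase w, ((cnt n g u).factorial : ℚ) := by
    apply Finset.prod_congr rfl
    intro u hu
    simp only [Finset.mem_erase, Finset.mem_univ, and_true] at hu
    rw [cnt_u n g v w A u hu.2 hu.1]
  rw [this, Nat.factorial_succ]
  unfold QQ
  push_cast
  ring

def clsSum (n : ℕ) (g : Fin (n+1) → Fin (n+1)) (v w : Fin (n+1)) (k : ℕ) : ℚ :=
  ∑ A ∈ (SS n g v w).powerset, probPF n (fA n g v w A) * DD n (fA n g v w A) k v w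

theorem cls_nonneg (n : ℕ) (g : Fin (n+1) → Fin (n+1)) (v w : Fin (n+1)) (hg : CanonPF n v w g)
    (hv : 1 ≤ v.val) (hw : w.val = v.val + 1) (k : ℕ) (hk : 2 ≤ k) :
    0 ≤ clsSum n g v w k := by
  have h := fkg_app (SS n g v w) (fun A => DD n (fA n g v w A) k v w)
    (DD_mono n g v w hg hv hw k hk) (DD_compl n g v w hg hv hw k hk)
  rw [sum_muA] at h
  have : clsSum n g v w k = QQ n g v w * ∑ A ∈ (SS n g v w).powerset,
      ((A.card.factorial * ((SS n g v w).card - A.card).factorial : ℕ) : ℚ) *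
        ((A.card + 1 : ℚ) * DD n (fA n g v w A) k v w) := by
    unfold clsSum
    rw [Finset.mul_sum]
    apply Finset.sum_congr rfl
    intro A hA
    rw [prob_fA n g v w hg hv hw A (Finset.mem_powerset.1 hA)]
    ring
  rw [this]
  exact mul_nonneg (QQ_pos n g v w).le h

theorem cls_pos (n : ℕ) (g : Fin (n+1) → Fin (n+1)) (v w : Fin (n+1)) (hg : CanonPF n v w g)
    (hv : 1 ≤ v.val) (hw : w.val = v.val + 1) (k : ℕ) (hk : 2 ≤ k)
    (hc : (SS n g v w).card ≤ 1) (hD : 0 < DD n (fA n g v w (SS n g v w)) k v w) :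
    0 < clsSum n g v w k := by
  have hQ := QQ_pos n g v w
  unfold clsSum
  have hp := fun A hA => prob_fA n g v w hg hv hw A hA
  have hC := DD_compl n g v w hg hv hw k hk (SS n g v w)
  rcases Nat.le_one_iff_eq_zero_or_eq_one.1 hc with h0 | h1
  · rw [Finset.card_eq_zero] at h0
    rw [h0] at hp hD ⊢
    rw [Finset.powerset_empty, Finset.sum_singleton, hp ∅ (Finset.Subset.refl _)]
    simp only [Finset.card_empty, Nat.factorial_zero]
    push_cast
    exact mul_pos (by simpa using hQ) hD
  · obtain ⟨c, hS⟩ := Finset.card_eq_one.1 h1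
    rw [hS] at hp hD hC ⊢
    have : ({c} : Finset (Fin (n+1))).powerset = {∅, {c}} := by
      ext A; simp [Finset.subset_singleton_iff]
    rw [this, Finset.sum_pair (by simp [Finset.ext_iff]), hp ∅ (by simp), hp {c} (Finset.Subset.refl _)]
    simp only [Finset.card_empty, Finset.card_singleton, Nat.factorial]
    simp only [Finset.sdiff_self] at hC
    push_cast
    norm_num
    nlinarith [mul_pos hQ hD, mul_nonneg hQ.le hC]


def swF (n : ℕ) (f : Fin (n+1) → Fin (n+1)) (v w : Fin (n+1)) (t : Fin (n+1)) : Fin (n+1) :=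
  Equiv.swap v w (f (Equiv.swap v w t))

theorem swF_invol (n : ℕ) (f : Fin (n+1) → Fin (n+1)) (v w : Fin (n+1)) :
    swF n (swF n f v w) v w = f := by
  funext t
  simp [swF]

theorem two_le_v (n : ℕ) (f : Fin (n+1) → Fin (n+1)) (v w : Fin (n+1)) (hf : ValidPF n f)
    (hv : 1 ≤ v.val) (hw : w.val = v.val + 1) (h : f w ≠ v) : 2 ≤ v.val := by
  by_contra h2
  have := hf.2 w (by omega)
  exact h (Fin.ext (by omega))

theorem swF_valid (n : ℕ) (f : Fin (n+1) → Fin (n+1)) (v w : Fin (n+1)) (hf : ValidPF n f)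
    (hv : 1 ≤ v.val) (hw : w.val = v.val + 1) (h : f w ≠ v) :
    ValidPF n (swF n f v w) ∧ swF n f v w w ≠ v := by
  have hv2 := two_le_v n f v w hf hv hw h
  have hne : ∀ x y : Fin (n+1), x ≠ y → x.val ≠ y.val := fun x y h h' => h (Fin.ext h')
  have hfw := hf.2 w (by omega)
  have hfv := hf.2 v hv2
  have h' := hne _ _ h
  refine ⟨⟨?_, ?_⟩, ?_⟩
  · intro t ht
    have h1 : t ≠ v := fun h => by subst h; omega
    have h2 : t ≠ w := fun h => by subst h; omega
    unfold swF
    have h0 := hf.1 t ht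
    rw [Equiv.swap_apply_of_ne_of_ne h1 h2, Equiv.swap_apply_of_ne_of_ne, h0]
    · intro h; rw [h] at h0; omega
    · intro h; rw [h] at h0; omega
  · intro t ht
    unfold swF
    by_cases h1 : t = v
    · subst h1
      rw [Equiv.swap_apply_left, Equiv.swap_apply_of_ne_of_ne h (fun h => by rw [h] at hfw; omega)]
      omega
    by_cases h2 : t = w
    · subst h2
      rw [Equiv.swap_apply_right, Equiv.swap_apply_of_ne_of_ne (fun h => by rw [h] at hfv; omega)
        (fun h => by rw [h] at hfv; omega)]
      omega
    rw [Equiv.swap_apply_of_ne_of_ne h1 h2]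
    have h3 := hf.2 t ht
    have h1' := hne _ _ h1
    have h2' := hne _ _ h2
    by_cases h4 : f t = v
    · rw [h4, Equiv.swap_apply_left]
      rw [h4] at h3; omega
    by_cases h5 : f t = w
    · rw [h5, Equiv.swap_apply_right]
      rw [h5] at h3; omega
    rw [Equiv.swap_apply_of_ne_of_ne h4 h5]
    exact h3
  · unfold swF
    rw [Equiv.swap_apply_right, Equiv.swap_apply_of_ne_of_ne (fun h => by rw [h] at hfv; omega)
        (fun h => by rw [h] at hfv; omega)]
    intro h; rw [h] at hfv; omega

theorem swap_two_le (n : ℕ) (v w t : Fin (n+1)) (hv : 2 ≤ v.val) (hw : 2 ≤ w.val) :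
    2 ≤ (Equiv.swap v w t).val ↔ 2 ≤ t.val := by
  rw [Equiv.swap_apply_def]
  split_ifs with h1 h2
  · subst h1; simp [hv, hw]
  · subst h2; simp [hv, hw]
  · rfl

theorem swF_cnt (n : ℕ) (f : Fin (n+1) → Fin (n+1)) (v w : Fin (n+1)) (hv : 2 ≤ v.val)
    (hw : 2 ≤ w.val) (u : Fin (n+1)) :
    cnt n (swF n f v w) u = cnt n f (Equiv.swap v w u) := by
  unfold cnt
  refine Finset.card_bij' (fun t _ => Equiv.swap v w t) (fun t _ => Equiv.swap v w t) ?_ ?_ ?_ ?_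
  · intro t ht
    simp only [Finset.mem_filter, Finset.mem_univ, true_and] at ht ⊢
    simp only [swF] at ht ⊢
    exact ⟨(swap_two_le n v w t hv hw).2 ht.1, by rw [← ht.2]; simp⟩
  · intro t ht
    simp only [Finset.mem_filter, Finset.mem_univ, true_and] at ht ⊢
    simp only [swF] at ht ⊢
    refine ⟨(swap_two_le n v w t hv hw).2 ht.1, by simp [ht.2]⟩
  · intro t _; simp
  · intro t _; simp

theorem swF_prob (n : ℕ) (f : Fin (n+1) → Fin (n+1)) (v w : Fin (n+1)) (hv : 2 ≤ v.val)
    (hw : 2 ≤ w.val) : probPF n (swF n f v w) = probPF n f := by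
  rw [prob_eq, prob_eq]
  congr 1
  rw [← Equiv.prod_comp (Equiv.swap v w) (fun u => ((cnt n f u).factorial : ℚ))]
  apply Finset.prod_congr rfl
  intro u _
  rw [swF_cnt n f v w hv hw]

theorem hom_dist_le {V W : Type*} (G : SimpleGraph V) (H : SimpleGraph W) (φ : G →g H) (x y : V)
    (hr : G.Reachable x y) : H.dist (φ x) (φ y) ≤ G.dist x y := by
  obtain ⟨p, hp⟩ := hr.exists_walk_length_eq_dist
  rw [← hp, ← SimpleGraph.Walk.length_map φ p]
  exact SimpleGraph.dist_le _

theorem iso_dist {V W : Type*} (G : SimpleGraph V) (H : SimpleGraph W) (φ : G ≃g H) (x y : V) :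
    H.dist (φ x) (φ y) = G.dist x y := by
  by_cases hr : G.Reachable x y
  · apply le_antisymm (hom_dist_le G H φ.toHom x y hr)
    have := hom_dist_le H G φ.symm.toHom (φ x) (φ y) (hr.map φ.toHom)
    simpa using this
  · have hr' : ¬ H.Reachable (φ x) (φ y) := fun h => hr (by simpa using h.map φ.symm.toHom)
    rw [SimpleGraph.dist_eq_zero_of_not_reachable hr, SimpleGraph.dist_eq_zero_of_not_reachable hr']

theorem swF_dist (n : ℕ) (f : Fin (n+1) → Fin (n+1)) (v w : Fin (n+1)) (hf : ValidPF n f)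
    (hf' : ValidPF n (swF n f v w)) (hv : 2 ≤ v.val) (hw : 2 ≤ w.val) (x y : Fin (n+1)) :
    (treeGraphPF n (swF n f v w)).dist (Equiv.swap v w x) (Equiv.swap v w y) =
      (treeGraphPF n f).dist x y := by
  refine iso_dist (treeGraphPF n f) (treeGraphPF n (swF n f v w)) ⟨Equiv.swap v w, ?_⟩ x y
  intro a b
  rw [tree_adj n _ hf', tree_adj n _ hf, swap_two_le n v w _ hv hw, swap_two_le n v w _ hv hw]
  simp [swF]

theorem swF_NN (n : ℕ) (f : Fin (n+1) → Fin (n+1)) (v w : Fin (n+1)) (hf : ValidPF n f)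
    (hf' : ValidPF n (swF n f v w)) (hv : 2 ≤ v.val) (hw : 2 ≤ w.val) (k : ℕ) (u : Fin (n+1)) :
    NN n f k u = NN n (swF n f v w) k (Equiv.swap v w u) := by
  have hd := swF_dist n f v w hf hf' hv hw
  unfold NN
  refine Finset.card_bij' (fun p _ => (Equiv.swap v w p.1, Equiv.swap v w p.2))
    (fun p _ => (Equiv.swap v w p.1, Equiv.swap v w p.2)) ?_ ?_ ?_ ?_
  · intro p hp
    simp only [Finset.mem_filter, Finset.mem_univ, true_and] at hp ⊢
    simp only [IsInterior, hd] at hp ⊢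
    simpa using hp
  · intro p hp
    obtain ⟨a, b⟩ := p
    obtain ⟨a, rfl⟩ := (Equiv.swap v w).surjective a
    obtain ⟨b, rfl⟩ := (Equiv.swap v w).surjective b
    simp only [Finset.mem_filter, Finset.mem_univ, true_and] at hp
    simp only [IsInterior, hd] at hp
    rw [Finset.mem_filter]
    simpa [IsInterior] using hp
  · intro p _; simp
  · intro p _; simp

theorem swap_sum (n : ℕ) (v w : Fin (n+1)) (hv : 1 ≤ v.val) (hw : w.val = v.val + 1) (k : ℕ) :
    ∑ f ∈ Finset.univ.filter (fun f : Fin (n+1) → Fin (n+1) => ValidPF n f ∧ f w ≠ v),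
      probPF n f * DD n f k v w = 0 := by
  have h : ∑ f ∈ Finset.univ.filter (fun f : Fin (n+1) → Fin (n+1) => ValidPF n f ∧ f w ≠ v),
      probPF n f * DD n f k v w =
      ∑ f ∈ Finset.univ.filter (fun f : Fin (n+1) → Fin (n+1) => ValidPF n f ∧ f w ≠ v),
      -(probPF n f * DD n f k v w) := by
    refine Finset.sum_bij' (fun f _ => swF n f v w) (fun f _ => swF n f v w) ?_ ?_ ?_ ?_ ?_
    · intro f hf
      simp only [Finset.mem_filter, Finset.mem_univ, true_and] at hf ⊢
      exact swF_valid n f v w hf.1 hv hw hf.2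
    · intro f hf
      simp only [Finset.mem_filter, Finset.mem_univ, true_and] at hf ⊢
      exact swF_valid n f v w hf.1 hv hw hf.2
    · intro f _; exact swF_invol n f v w
    · intro f _; exact swF_invol n f v w
    · intro f hf
      simp only [Finset.mem_filter, Finset.mem_univ, true_and] at hf
      have hv2 := two_le_v n f v w hf.1 hv hw hf.2
      have hf' := (swF_valid n f v w hf.1 hv hw hf.2).1
      rw [swF_prob n f v w hv2 (by omega)]
      unfold DD
      rw [swF_NN n f v w hf.1 hf' hv2 (by omega) k v, swF_NN n f v w hf.1 hf' hv2 (by omega) k w,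
        Equiv.swap_apply_left, Equiv.swap_apply_right]
      ring
  rw [Finset.sum_neg_distrib] at h
  linarith


def canF (n : ℕ) (f : Fin (n+1) → Fin (n+1)) (v w : Fin (n+1)) (t : Fin (n+1)) : Fin (n+1) :=
  if f t = w then v else f t

theorem canF_canon (n : ℕ) (f : Fin (n+1) → Fin (n+1)) (v w : Fin (n+1)) (hf : ValidPF n f)
    (hv : 1 ≤ v.val) (hw : w.val = v.val + 1) (h : f w = v) : CanonPF n v w (canF n f v w) := by
  have hvw : v ≠ w := fun h => by rw [h] at hw; omega
  refine ⟨⟨?_, ?_⟩, ?_, ?_⟩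
  · intro t ht
    unfold canF
    have := hf.1 t ht
    rw [if_neg (fun h => by rw [h] at this; omega)]
    exact this
  · intro t ht
    unfold canF
    have := hf.2 t ht
    split_ifs with h1
    · rw [h1] at this; omega
    · exact this
  · simp [canF, h]
  · intro t
    unfold canF
    split_ifs with h1
    · exact hvw
    · exact h1

theorem fiber_sum (n : ℕ) (v w : Fin (n+1)) (hv : 1 ≤ v.val) (hw : w.val = v.val + 1)
    (F : (Fin (n+1) → Fin (n+1)) → ℚ) :
    ∑ f ∈ Finset.univ.filter (fun f : Fin (n+1) → Fin (n+1) => ValidPF n f ∧ f w = v), F f =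
    ∑ g ∈ Finset.univ.filter (fun g : Fin (n+1) → Fin (n+1) => CanonPF n v w g),
      ∑ A ∈ (SS n g v w).powerset, F (fA n g v w A) := by
  have hvw : v ≠ w := fun h => by rw [h] at hw; omega
  rw [← Finset.sum_fiberwise_of_maps_to (g := fun f => canF n f v w)
    (t := Finset.univ.filter (fun g : Fin (n+1) → Fin (n+1) => CanonPF n v w g))]
  · apply Finset.sum_congr rfl
    intro g hg
    simp only [Finset.mem_filter, Finset.mem_univ, true_and] at hg
    symm
    refine Finset.sum_bij' (fun A _ => fA n g v w A)
      (fun f _ => Finset.univ.filter (fun t => f t = v ∧ t ≠ w)) ?_ ?_ ?_ ?_ ?_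
    · intro A hA
      simp only [Finset.mem_filter, Finset.mem_univ, true_and]
      refine ⟨⟨fA_valid n g v w hg hv hw A, by simp [fA, hg.2.1]⟩, ?_⟩
      funext t
      have := hg.2.2 t
      simp only [canF, fA]
      grind
    · intro f hf
      simp only [Finset.mem_filter, Finset.mem_univ, true_and] at hf
      obtain ⟨-, rfl⟩ := hf
      rw [Finset.mem_powerset]
      intro t ht
      simp only [SS, Finset.mem_filter, Finset.mem_univ, true_and] at ht ⊢
      unfold canF
      grind
    · intro A hA
      have hA := Finset.mem_powerset.1 hA
      ext t
      have h1 : t ∈ A → g t = v ∧ t ≠ w := fun h => by simpa [SS] using hA h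
      simp only [Finset.mem_filter, Finset.mem_univ, true_and, fA]
      grind
    · intro f hf
      simp only [Finset.mem_filter, Finset.mem_univ, true_and] at hf
      obtain ⟨⟨_, h1⟩, rfl⟩ := hf
      funext t
      simp only [Finset.mem_filter, Finset.mem_univ, true_and, fA, canF]
      grind
    · intro A _; rfl
  · intro f hf
    simp only [Finset.mem_filter, Finset.mem_univ, true_and] at hf ⊢
    exact canF_canon n f v w hf.1 hv hw hf.2


def wg (n : ℕ) (v : Fin (n+1)) (t : Fin (n+1)) : Fin (n+1) :=
  ⟨if t.val < 2 then 0 else if t.val = v.val then 1 else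
    if t.val = v.val + 2 then max 1 (v.val - 1) else t.val - 1, by
    have := t.isLt; have := v.isLt
    split_ifs <;> omega⟩

theorem wg_val (n : ℕ) (v t : Fin (n+1)) : (wg n v t).val =
    if t.val < 2 then 0 else if t.val = v.val then 1 else
    if t.val = v.val + 2 then max 1 (v.val - 1) else t.val - 1 := rfl

theorem wg_canon (n : ℕ) (v w : Fin (n+1)) (hv : 1 ≤ v.val) (hw : w.val = v.val + 1) :
    CanonPF n v w (wg n v) := by
  refine ⟨⟨?_, ?_⟩, ?_, ?_⟩
  · intro t ht
    rw [wg_val]; simp [ht]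
  · intro t ht
    rw [wg_val]; split_ifs <;> omega
  · apply Fin.ext
    rw [wg_val]; split_ifs <;> omega
  · intro t h
    have := congrArg Fin.val h
    rw [wg_val] at this
    split_ifs at this <;> omega

theorem wg_SS (n : ℕ) (v w : Fin (n+1)) (hv : 1 ≤ v.val) (hw : w.val = v.val + 1) :
    (SS n (wg n v) v w).card ≤ 1 := by
  have key : ∀ t ∈ SS n (wg n v) v w, t.val = v.val + 2 := by
    intro t ht
    simp only [SS, Finset.mem_filter, Finset.mem_univ, true_and] at ht
    have h1 := congrArg Fin.val ht.1
    have h2 : t.val ≠ w.val := fun h => ht.2 (Fin.ext h)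
    rw [wg_val] at h1
    split_ifs at h1 <;> omega
  rw [Finset.card_le_one]
  intro a ha b hb
  exact Fin.ext (by rw [key a ha, key b hb])

theorem wg_pos1 (n : ℕ) (v w : Fin (n+1)) (hv : v.val = 1) (hw : w.val = v.val + 1)
    (k : ℕ) (hk : 2 ≤ k) (hkn : k + 1 ≤ n) :
    0 < DD n (fA n (wg n v) v w (SS n (wg n v) v w)) k v w := by
  have hc := wg_canon n v w hv.ge hw
  have hne : ∀ x y : Fin (n+1), x ≠ y → x.val ≠ y.val := fun x y h h' => h (Fin.ext h')
  let r : Fin (n+1) := ⟨3, by omega⟩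
  have hr : ∀ x : Fin (n+1), 3 ≤ x.val → rho n (wg n v) v x = r := by
    apply fin_ind
    intro x ih hx
    by_cases h3 : x.val = 3
    · rw [rho_root]
      · exact Fin.ext h3
      · apply Fin.ext; rw [wg_val]; split_ifs <;> omega
    · have hval : (wg n v x).val = x.val - 1 := by rw [wg_val]; split_ifs <;> omega
      rw [rho_step n _ hc.1 v x (fun h => by rw [h] at hval; omega) (by omega)]
      exact ih _ (by omega) (by omega)
  have hd := aux_dist (RG n (wg n v) v) r (fun x => x.val - 3) (fun x => 3 ≤ x.val) rfl
    (by
      intro x y h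
      rcases (RG_adj n _ hc.1 v x y).1 h with ⟨h1, rfl, h3⟩ | ⟨h1, rfl, h3⟩
      · have := hne _ _ h3
        rw [wg_val] at this
        simp only [wg_val]
        split_ifs at this ⊢ <;> omega
      · have := hne _ _ h3
        rw [wg_val] at this
        simp only [wg_val]
        split_ifs at this ⊢ <;> omega)
    (by
      intro x hx hxr
      have hxr : x.val ≠ 3 := hne _ _ hxr
      have hval : (wg n v x).val = x.val - 1 := by rw [wg_val]; split_ifs <;> omega
      refine ⟨wg n v x, by omega, ?_, by omega⟩
      rw [RG_adj n _ hc.1]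
      exact Or.inl ⟨by omega, rfl, fun h => by rw [h] at hval; omega⟩)
  let x : Fin (n+1) := ⟨k+1, by omega⟩
  have hx : x.val = k + 1 := rfl
  have hrx := hr x (by omega)
  have hr3 : r.val = 3 := rfl
  refine DD_pos n (wg n v) v w hc hv.ge hw k hk x (by omega) (fun h => by rw [h] at hx; omega)
    (fun h => by rw [h] at hx; omega) (Or.inr ⟨?_, ?_⟩)
  · rw [hrx]; intro h; rw [h] at hr3; omega
  · rw [hrx, SimpleGraph.dist_comm, (hd x (by omega)).2]
    omega

theorem wg_pos2 (n : ℕ) (v w : Fin (n+1)) (hv : 2 ≤ v.val) (hw : w.val = v.val + 1)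
    (k : ℕ) (hk : 2 ≤ k) (hkn : k + 1 ≤ n) :
    0 < DD n (fA n (wg n v) v w (SS n (wg n v) v w)) k v w := by
  have hc := wg_canon n v w (by omega) hw
  have hne : ∀ x y : Fin (n+1), x ≠ y → x.val ≠ y.val := fun x y h h' => h (Fin.ext h')
  have hr : ∀ x : Fin (n+1), x.val ≠ w.val → rho n (wg n v) v x = v := by
    apply fin_ind
    intro x ih hx
    by_cases h3 : x.val ≤ v.val
    · exact rho_le n _ hc.1 v (by omega) x h3
    · have hval : (wg n v x).val ≠ v.val ∧ (wg n v x).val ≠ w.val ∧ (wg n v x).val < x.val := by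
        rw [wg_val]; split_ifs <;> omega
      rw [rho_step n _ hc.1 v x (fun h => by rw [h] at hval; omega) (by omega)]
      exact ih _ hval.2.2 hval.2.1
  have hd := aux_dist (RG n (wg n v) v) v
    (fun x => if x.val < v.val then x.val else if x.val < v.val + 2 then 0 else x.val - 2)
    (fun x => 1 ≤ x.val ∧ x.val ≠ w.val) (by simp)
    (by
      intro x y h
      rcases (RG_adj n _ hc.1 v x y).1 h with ⟨h1, h2, h3⟩ | ⟨h1, h2, h3⟩
      · have h3 := hne _ _ h3
        have h2 := congrArg Fin.val h2
        rw [wg_val] at h2 h3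
        generalize x.val = X at *
        generalize y.val = Y at *
        split_ifs at h2 h3 ⊢ <;> omega
      · have h3 := hne _ _ h3
        have h2 := congrArg Fin.val h2
        rw [wg_val] at h2 h3
        generalize x.val = X at *
        generalize y.val = Y at *
        split_ifs at h2 h3 ⊢ <;> omega)
    (by
      intro x hx hxr
      have hxr := hne _ _ hxr
      by_cases h1 : x.val = 1
      · refine ⟨v, by omega, ?_, ?_⟩
        · rw [RG_adj n _ hc.1]
          have : wg n v v = x := by
            apply Fin.ext; rw [wg_val]; split_ifs <;> omega
          exact Or.inr ⟨by omega, this, by rw [this]; intro h; rw [h] at hxr; omega⟩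
        · skip
          split_ifs <;> omega
      · have hval := wg_val n v x
        refine ⟨wg n v x, ?_, ?_, ?_⟩
        · split_ifs at hval <;> omega
        · rw [RG_adj n _ hc.1]
          refine Or.inl ⟨by omega, rfl, fun h => ?_⟩
          rw [h] at hval
          split_ifs at hval <;> omega
        · skip
          generalize (wg n v x).val = Y at *
          split_ifs at hval ⊢ <;> omega)
  obtain ⟨x, hx⟩ : ∃ x : Fin (n+1), x.val = if k - 1 ≤ v.val - 1 then k - 1 else k + 1 :=
    ⟨⟨if k - 1 ≤ v.val - 1 then k - 1 else k + 1, by split_ifs <;> omega⟩, rfl⟩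
  have hx1 : 1 ≤ x.val ∧ x.val ≠ v.val ∧ x.val ≠ w.val := by
    split_ifs at hx <;> omega
  refine DD_pos n (wg n v) v w hc (by omega) hw k hk x hx1.1 (fun h => by rw [h] at hx1; omega)
    (fun h => by rw [h] at hx1; omega) (Or.inl ⟨hr x hx1.2.2, ?_⟩)
  rw [SimpleGraph.dist_comm, (hd x ⟨hx1.1, hx1.2.2⟩).2]
  split_ifs at hx ⊢ <;> omega


/-- In the scale-free random recursive tree `T_n` (`n ≥ 3`), for `1 ≤ v ≤ n - 1` and
`2 ≤ k ≤ n - 1`, the expected number of paths of length exactly `k` with `v` as an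
interior vertex strictly exceeds that for `v + 1`. -/
theorem expected_pexact_strictly_decreasing (n : ℕ) (hn : 3 ≤ n) (v w : Fin (n+1))
    (hv : 1 ≤ v.val) (hvn : v.val ≤ n - 1) (hw : w.val = v.val + 1)
    (k : ℕ) (hk2 : 2 ≤ k) (hkn : k ≤ n - 1) :
    ∑ f ∈ Finset.univ.filter (fun f : Fin (n+1) → Fin (n+1) => ValidPF n f),
        probPF n f * (pexactPF n f k v : ℚ)
      > ∑ f ∈ Finset.univ.filter (fun f : Fin (n+1) → Fin (n+1) => ValidPF n f),
        probPF n f * (pexactPF n f k w : ℚ) := by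
  have h1 := swap_sum n v w hv hw k
  have h2 := fiber_sum n v w hv hw (fun f => probPF n f * DD n f k v w)
  have hpos : 0 < DD n (fA n (wg n v) v w (SS n (wg n v) v w)) k v w := by
    by_cases h : v.val = 1
    · exact wg_pos1 n v w h hw k hk2 (by omega)
    · exact wg_pos2 n v w (by omega) hw k hk2 (by omega)
  have hc := wg_canon n v w hv hw
  have h3 : 0 < ∑ g ∈ Finset.univ.filter (fun g : Fin (n+1) → Fin (n+1) => CanonPF n v w g),
      clsSum n g v w k := by
    refine Finset.sum_pos' ?_ ⟨wg n v, ?_, ?_⟩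
    · intro g hg
      exact cls_nonneg n g v w (Finset.mem_filter.1 hg).2 hv hw k hk2
    · exact Finset.mem_filter.2 ⟨Finset.mem_univ _, hc⟩
    · exact cls_pos n (wg n v) v w hc hv hw k hk2 (wg_SS n v w hv hw) hpos
  have h4 : 0 < ∑ f ∈ Finset.univ.filter (fun f : Fin (n+1) → Fin (n+1) => ValidPF n f ∧ f w = v),
      probPF n f * DD n f k v w := by
    rw [h2]; exact h3
  have h5 := Finset.sum_filter_add_sum_filter_not
    (Finset.univ.filter (fun f : Fin (n+1) → Fin (n+1) => ValidPF n f)) (fun f => f w = v)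
    (fun f => probPF n f * DD n f k v w)
  rw [Finset.filter_filter, Finset.filter_filter] at h5
  have h6 : ∑ f ∈ Finset.univ.filter (fun f : Fin (n+1) → Fin (n+1) => ValidPF n f),
        probPF n f * (pexactPF n f k v : ℚ)
      - ∑ f ∈ Finset.univ.filter (fun f : Fin (n+1) → Fin (n+1) => ValidPF n f),
        probPF n f * (pexactPF n f k w : ℚ) =
      (∑ f ∈ Finset.univ.filter (fun f : Fin (n+1) → Fin (n+1) => ValidPF n f),
        probPF n f * DD n f k v w) / 2 := by
    rw [← Finset.sum_sub_distrib, Finset.sum_div]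
    apply Finset.sum_congr rfl
    intro f _
    rw [pexact_eq n f k (by omega), pexact_eq n f k (by omega)]
    unfold DD
    ring
  have h7 : 0 < ∑ f ∈ Finset.univ.filter (fun f : Fin (n+1) → Fin (n+1) => ValidPF n f),
        probPF n f * DD n f k v w := by
    rw [← h5]
    have h1' := h1.symm
    exact lt_of_lt_of_le h4 (le_add_of_nonneg_right (le_of_eq h1'))
  linarith


end
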